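/- A word w over the alphabet X ⊔ {⌊, ⌋} belongs to W(X) if and only if (i) the number of occurrences of ⌊ in w equals the number of occurrences of ⌋ in w, and (ii) for every prefix of w, the number of occurrences of ⌊ in the prefix is greater than or equal to the number of occurrences of ⌋ in the prefix. That is, the operated submonoid of the free monoid generated by X coincides with the set of X-decorated Motzkin words. -/

import Mathlib

/-- The left bracket letter `⌊` (alphabet `X ⊕ Bool`, with `Sum.inr true = ⌊`,
`Sum.inr false = ⌋`). -/
def lb {X : Type*} : FreeMonoid (X ⊕ Bool) := FreeMonoid.of (Sum.inr true)

/-- The right bracket letter `⌋`. -/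
def rb {X : Type*} : FreeMonoid (X ⊕ Bool) := FreeMonoid.of (Sum.inr false)

/-- `W(X)`: the smallest subset of the free monoid on `X ⊔ {⌊, ⌋}` containing the empty
word `1` and all one-letter words `x` (`x ∈ X`), closed under concatenation and under
`P(w) = ⌊ w ⌋`. -/
inductive IsMW (X : Type*) : FreeMonoid (X ⊕ Bool) → Prop
  | one : IsMW X 1
  | letter (x : X) : IsMW X (FreeMonoid.of (Sum.inl x))
  | mul {u v : FreeMonoid (X ⊕ Bool)} : IsMW X u → IsMW X v → IsMW X (u * v)
  | op {u : FreeMonoid (X ⊕ Bool)} : IsMW X u → IsMW X (lb * u * rb)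

def DecW (X : Type*) : ℕ → FreeMonoid (X ⊕ Bool) → Prop
  | 0, w => IsMW X w
  | n + 1, w => ∃ u v, IsMW X u ∧ DecW X n v ∧ w = u * rb * v

theorem DecW.prepend {X : Type*} {n : ℕ} {u w : FreeMonoid (X ⊕ Bool)} (hu : IsMW X u)
    (h : DecW X n w) : DecW X n (u * w) := by
  cases n with
  | zero => exact IsMW.mul hu h
  | succ n =>
    obtain ⟨a, b, ha, hb, rfl⟩ := h
    exact ⟨u * a, b, hu.mul ha, hb, by simp [mul_assoc]⟩

theorem decW_of_counts {X : Type*} {f g : X ⊕ Bool → Bool}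
    (f0 : ∀ x, f (Sum.inl x) = false) (f1 : f (Sum.inr true) = true)
    (f2 : f (Sum.inr false) = false) (g0 : ∀ x, g (Sum.inl x) = false)
    (g1 : g (Sum.inr true) = false) (g2 : g (Sum.inr false) = true)
    (l : List (X ⊕ Bool)) : ∀ n : ℕ,
    l.countP f + n =
      l.countP g →
    (∀ p : List (X ⊕ Bool), p <+: l →
        p.countP g ≤
          p.countP f + n) →
    DecW X n (FreeMonoid.ofList l) := by
  induction l with
  | nil =>
    intro n h _
    simp [f0, f1, f2, g0, g1, g2] at h
    subst h
    exact IsMW.one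
  | cons a l ih =>
    intro n h hp
    have hp' := fun p (h : p <+: l) => hp (a :: p) (by simpa [f0, f1, f2, g0, g1, g2] using h)
    rw [FreeMonoid.ofList_cons]
    rcases a with x | (_ | _)
    · simp only [List.countP_cons] at h hp'
      exact (ih n (by simpa [f0, f1, f2, g0, g1, g2] using h) (by simpa [f0, f1, f2, g0, g1, g2] using hp')).prepend (.letter x)
    · have h0 := hp [Sum.inr false] (by simp)
      simp only [List.countP_cons] at h hp'
      simp [f0, f1, f2, g0, g1, g2] at h hp' h0
      obtain ⟨m, rfl⟩ : ∃ m, n = m + 1 := ⟨n - 1, by omega⟩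
      exact ⟨1, _, .one, ih m (by omega) (fun p h => by have := hp' p h; simp [f0, f1, f2, g0, g1, g2] at this ⊢; omega),
        by simp [rb]⟩
    · simp only [List.countP_cons] at h hp'
      simp [f0, f1, f2, g0, g1, g2] at h hp'
      obtain ⟨u, v, hu, hv, e⟩ := ih (n + 1) (by omega)
        (fun p h => by have := hp' p h; simp [f0, f1, f2, g0, g1, g2] at this ⊢; omega)
      rw [e]
      have := hv.prepend hu.op
      simpa [lb, mul_assoc] using this

theorem prefix_append_cases {α : Type*} {p u v : List α} (h : p <+: u ++ v) :
    p <+: u ∨ ∃ t, t <+: v ∧ p = u ++ t := by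
  obtain ⟨s, hs⟩ := h
  rcases List.append_eq_append_iff.1 hs with ⟨a, h1, h2⟩ | ⟨a, h1, h2⟩
  · exact .inl ⟨a, h1.symm⟩
  · exact .inr ⟨a, ⟨s, h2.symm⟩, h1⟩

theorem counts_of_isMW {X : Type*} {f g : X ⊕ Bool → Bool}
    (f0 : ∀ x, f (Sum.inl x) = false) (f1 : f (Sum.inr true) = true)
    (f2 : f (Sum.inr false) = false) (g0 : ∀ x, g (Sum.inl x) = false)
    (g1 : g (Sum.inr true) = false) (g2 : g (Sum.inr false) = true)
    {w : FreeMonoid (X ⊕ Bool)} (h : IsMW X w) :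
      ((FreeMonoid.toList w).countP f =
        (FreeMonoid.toList w).countP g) ∧
      ∀ p : List (X ⊕ Bool), p <+: FreeMonoid.toList w →
        p.countP g ≤
          p.countP f := by
  induction h with
  | one => simp
  | letter x =>
    refine ⟨by simp [FreeMonoid.toList_of, f0, f1, f2, g0, g1, g2], fun p hp => ?_⟩
    rw [FreeMonoid.toList_of, List.prefix_cons_iff] at hp
    rcases hp with rfl | ⟨t, rfl, ht⟩
    · simp
    · simp [f0, f1, f2, g0, g1, g2] at ht; subst ht; simp [f0, f1, f2, g0, g1, g2]
  | mul _ _ ihu ihv =>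
    rw [FreeMonoid.toList_mul]
    refine ⟨by simp only [List.countP_append]; omega, fun p hp => ?_⟩
    rcases prefix_append_cases hp with hp | ⟨t, ht, rfl⟩
    · exact ihu.2 p hp
    · have := ihv.2 t ht
      simp only [List.countP_append]; omega
  | op _ ih =>
    rw [FreeMonoid.toList_mul, FreeMonoid.toList_mul, lb, rb, FreeMonoid.toList_of,
      FreeMonoid.toList_of, List.append_assoc, List.singleton_append]
    refine ⟨by simp only [List.countP_append, List.countP_cons]; simpa [f0, f1, f2, g0, g1, g2] using ih.1,
      fun p hp => ?_⟩
    rw [List.prefix_cons_iff] at hp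
    rcases hp with rfl | ⟨t, rfl, ht⟩
    · simp
    rcases prefix_append_cases ht with hp | ⟨t, hs, rfl⟩
    · have := ih.2 t hp
      simp only [List.countP_cons]; simp [f0, f1, f2, g0, g1, g2]; omega
    · rw [List.prefix_cons_iff] at hs
      have h1 := ih.1
      rcases hs with rfl | ⟨t, rfl, ht⟩
      · simp only [List.countP_cons, List.append_nil]; simp [f0, f1, f2, g0, g1, g2]; omega
      · simp [f0, f1, f2, g0, g1, g2] at ht; subst ht
        simp only [List.countP_cons, List.countP_append]; simp [f0, f1, f2, g0, g1, g2]; omega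

/-- A word `w` over `X ⊔ {⌊, ⌋}` lies in `W(X)` if and only if (i) the number of `⌊`'s in
`w` equals the number of `⌋`'s in `w`, and (ii) in every prefix of `w`, the number of `⌊`'s
is at least the number of `⌋`'s. -/
theorem isMW_iff_balanced (X : Type*) [Nonempty X] (w : FreeMonoid (X ⊕ Bool)) :
    IsMW X w ↔
      ((FreeMonoid.toList w).countP (fun a => a matches Sum.inr true) =
        (FreeMonoid.toList w).countP (fun a => a matches Sum.inr false)) ∧
      ∀ p : List (X ⊕ Bool), p <+: FreeMonoid.toList w →
        p.countP (fun a => a matches Sum.inr false) ≤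
          p.countP (fun a => a matches Sum.inr true) := by
  refine ⟨counts_of_isMW (fun _ => rfl) rfl rfl (fun _ => rfl) rfl rfl, fun ⟨h1, h2⟩ => ?_⟩
  exact decW_of_counts (fun _ => rfl) rfl rfl (fun _ => rfl) rfl rfl
    (FreeMonoid.toList w) 0 h1 h2
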